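/- arXiv:2101.08956 — 5 statements merged into one kernel-verified Lean document; each statement's English description precedes it below -/
import Mathlib

section
/- For every real u > 1 and every real v such that w := 4u² + 4v² − 3 − 4u²v² ≥ 0, each of the four vectors n₂, n₄, n₇, n₈ is a unit spacelike vector for the Minkowski form, i.e. B(nᵢ, nᵢ) = 1 for i ∈ {2, 4, 7, 8}. -/
/-!
With `s = √w`, the two coordinates `x₀`, `x₃` of `n2` and `n4` contribute
`(-(u - s)² + (u s - 1)²) / (4 (u² - 1)²) = (w - 1) / (4 (u² - 1))`, and
`w - 1 = 4 (u² - 1) (1 - v²)`, so the contribution is `1 - v²`. With `a = √3` and `b = √(u² + 2)`,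
those of `n7` and `n8` contribute `(b² - u² a²) / (4 (u² - 1)) = -1/2`, which the remaining two
coordinates, of square `3/4` each, complete to `1`. The signs of `±v` and `±√3/2` are immaterial.
-/

noncomputable section

open Real

/-- The Minkowski bilinear form of signature (3,1) on `ℝ⁴`. -/
def B (x y : Fin 4 → ℝ) : ℝ := -(x 0 * y 0) + x 1 * y 1 + x 2 * y 2 + x 3 * y 3

/-- Unit normal of Face 2. -/
def n2 (u v w : ℝ) : Fin 4 → ℝ :=
  ![(u - sqrt w) / (2 * u ^ 2 - 2), v, 0, (-1 + u * sqrt w) / (2 * u ^ 2 - 2)]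

/-- Unit normal of Face 4. -/
def n4 (u v w : ℝ) : Fin 4 → ℝ :=
  ![(u - sqrt w) / (2 * u ^ 2 - 2), -v, 0, (-1 + u * sqrt w) / (2 * u ^ 2 - 2)]

/-- Unit normal of Face 7. -/
def n7 (u : ℝ) : Fin 4 → ℝ :=
  ![(u ^ 2 * sqrt 3 - sqrt (u ^ 2 + 2)) / (2 * u ^ 2 - 2), -(sqrt 3 / 2), sqrt 3 / 2,
    (u * sqrt (u ^ 2 + 2) - u * sqrt 3) / (2 * u ^ 2 - 2)]

/-- Unit normal of Face 8. -/
def n8 (u : ℝ) : Fin 4 → ℝ :=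
  ![(u ^ 2 * sqrt 3 - sqrt (u ^ 2 + 2)) / (2 * u ^ 2 - 2), sqrt 3 / 2, sqrt 3 / 2,
    (u * sqrt (u ^ 2 + 2) - u * sqrt 3) / (2 * u ^ 2 - 2)]

/-- The form restricted to coordinates `x₀`, `x₃` for `n2` and `n4`, with `s` in place of `√w`. -/
lemma boost_part_n2 (u v s : ℝ) (hD : 2 * u ^ 2 - 2 ≠ 0)
    (hs : s ^ 2 = 4 * u ^ 2 + 4 * v ^ 2 - 3 - 4 * u ^ 2 * v ^ 2) :
    -((u - s) / (2 * u ^ 2 - 2)) ^ 2 + ((-1 + u * s) / (2 * u ^ 2 - 2)) ^ 2 = 1 - v ^ 2 := by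
  rw [div_pow, div_pow, ← neg_div, ← add_div, div_eq_iff (pow_ne_zero 2 hD)]
  linear_combination (u ^ 2 - 1) * hs

/-- The form restricted to coordinates `x₀`, `x₃` for `n7` and `n8`, with `a`, `b` in place of
`√3`, `√(u² + 2)`. -/
lemma boost_part_n7 (u a b : ℝ) (hD : 2 * u ^ 2 - 2 ≠ 0) (ha : a ^ 2 = 3) (hb : b ^ 2 = u ^ 2 + 2) :
    -((u ^ 2 * a - b) / (2 * u ^ 2 - 2)) ^ 2 + ((u * b - u * a) / (2 * u ^ 2 - 2)) ^ 2
      = -(1 / 2) := by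
  rw [div_pow, div_pow, ← neg_div, ← add_div, div_eq_iff (pow_ne_zero 2 hD)]
  linear_combination (u ^ 2 - 1) * hb - (u ^ 2 - 1) * u ^ 2 * ha

/-- for `u > 1` and `w := 4u² + 4v² − 3 − 4u²v² ≥ 0`, the four vectors
`n₂, n₄, n₇, n₈` are unit spacelike vectors for the Minkowski form. -/
theorem unit_normals (u v w : ℝ) (hu : 1 < u)
    (hw : w = 4 * u ^ 2 + 4 * v ^ 2 - 3 - 4 * u ^ 2 * v ^ 2) (hw0 : 0 ≤ w) :
    B (n2 u v w) (n2 u v w) = 1 ∧ B (n4 u v w) (n4 u v w) = 1 ∧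
    B (n7 u) (n7 u) = 1 ∧ B (n8 u) (n8 u) = 1 := by
  have hD : 2 * u ^ 2 - 2 ≠ 0 := by nlinarith
  have h2 := boost_part_n2 u v (sqrt w) hD (by rw [sq_sqrt hw0, hw])
  have h3 : sqrt 3 ^ 2 = 3 := sq_sqrt (by norm_num)
  have h7 := boost_part_n7 u (sqrt 3) (sqrt (u ^ 2 + 2)) hD h3 (sq_sqrt (by positivity))
  refine ⟨?_, ?_, ?_, ?_⟩
  · simp only [B, n2, Matrix.cons_val]
    linear_combination h2
  · simp only [B, n4, Matrix.cons_val]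
    linear_combination h2
  · simp only [B, n7, Matrix.cons_val]
    linear_combination h7 + h3 / 2
  · simp only [B, n8, Matrix.cons_val]
    linear_combination h7 + h3 / 2
end
end

section
/- Let u > 1 and v ≠ 0 be real with w := 4u² + 4v² − 3 − 4u²v² ≥ 0. If x = (x₀,x₁,x₂,x₃) ∈ ℝ⁴ satisfies B(x, nᵢ) = 0 for all i ∈ {2, 4, 7, 8}, then x₁ = 0, (−1 + u√w)·x₃ = (u − √w)·x₀, and 3·(−1 + u√w)²·x₂² = (√3·u·√w − √(u²+2))²·x₀². -/
/-!
Write `s = √w` and `r = √(u² + 2)`. Subtracting the conditions for `n₂` and `n₄` gives `v x₁ = 0`,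
hence `x₁ = 0`, and either one then gives `(u s - 1) x₃ = (u - s) x₀`. The condition for `n₇` gives
`(u² - 1) √3 x₂ = (u² √3 - r) x₀ - u (r - √3) x₃`. Multiplying by `u s - 1` and eliminating `x₃`,
a factor `u² - 1 ≠ 0` cancels and leaves `√3 (u s - 1) x₂ = (√3 u s - r) x₀`, whose square is the
last claim.
-/

noncomputable section

open Real

/-- if `x` is `B`-orthogonal to `n₂, n₄, n₇, n₈`, then `x₁ = 0`,
`(−1 + u√w)·x₃ = (u − √w)·x₀`, and `3·(−1 + u√w)²·x₂² = (√3·u·√w − √(u²+2))²·x₀²`. -/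
theorem orthogonal_all (u v w : ℝ) (hu : 1 < u) (hv : v ≠ 0)
    (hw : w = 4 * u ^ 2 + 4 * v ^ 2 - 3 - 4 * u ^ 2 * v ^ 2) (hw0 : 0 ≤ w)
    (x : Fin 4 → ℝ) (h2 : B x (n2 u v w) = 0) (h4 : B x (n4 u v w) = 0)
    (h7 : B x (n7 u) = 0) (h8 : B x (n8 u) = 0) :
    x 1 = 0 ∧ (-1 + u * sqrt w) * x 3 = (u - sqrt w) * x 0 ∧
    3 * (-1 + u * sqrt w) ^ 2 * (x 2) ^ 2 =
      (sqrt 3 * u * sqrt w - sqrt (u ^ 2 + 2)) ^ 2 * (x 0) ^ 2 := by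
  have hd : u ^ 2 - 1 ≠ 0 := by nlinarith
  have hD : 2 * u ^ 2 - 2 ≠ 0 := by intro h; apply hd; linarith
  simp only [B, n2, n4, n7, Matrix.cons_val] at h2 h4 h7
  have h1 : x 1 = 0 := by
    have h : v * x 1 = 0 := by linarith
    exact (mul_eq_zero.mp h).resolve_left hv
  rw [h1] at h2 h7
  field_simp at h2 h7
  have h3 : (-1 + u * sqrt w) * x 3 = (u - sqrt w) * x 0 := by linarith
  refine ⟨h1, h3, ?_⟩
  have h5 : (u ^ 2 - 1) * sqrt 3 * x 2 =
      (u ^ 2 * sqrt 3 - sqrt (u ^ 2 + 2)) * x 0 - u * (sqrt (u ^ 2 + 2) - sqrt 3) * x 3 := by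
    linarith
  -- Multiply `h5` by `u √w - 1` and eliminate `x 3` with `h3`.
  have h6 : sqrt 3 * (-1 + u * sqrt w) * x 2 =
      (sqrt 3 * u * sqrt w - sqrt (u ^ 2 + 2)) * x 0 := by
    apply mul_left_cancel₀ hd
    linear_combination (-1 + u * sqrt w) * h5 - u * (sqrt (u ^ 2 + 2) - sqrt 3) * h3
  have h33 : sqrt 3 ^ 2 = (3 : ℝ) := Real.sq_sqrt (by norm_num)
  rw [← mul_pow, ← h6, mul_pow, mul_pow, h33]
end
end

section
/- Let u > 1 and v ≠ 0 be real with w := 4u² + 4v² − 3 − 4u²v² ≥ 0 and u·√w ≠ 1. If x = (x₀,x₁,x₂,x₃) ∈ ℝ⁴ satisfies B(x, nᵢ) = 0 for all i ∈ {2, 4, 7, 8} and in addition −x₀/√(u²−1) − x₃·u/√(u²−1) = 1, then x₀ = (1 − u√w)/√(u²−1), x₃ = (√w − u)/√(u²−1), x₁ = 0, and 3(u²−1)·x₂² = (√3·u·√w − √(u²+2))². -/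
/-!
The sums of the orthogonality equations for `n₂, n₄` and for `n₇, n₈` do not involve `x₁`, while the
difference of the first pair is `2 v x₁ = 0`. Write `r = √(u² - 1)`, `s = √w`, `t = √(u² + 2)`.
The first sum and the normalization `x₀ + u x₃ = -r` form a linear system for `x₀, x₃`
with determinant `-(u² - 1) ≠ 0`, whose solution is `r x₀ = 1 - u s`, `r x₃ = s - u`.
Substituting into the second sum gives `√3 r x₂ = t - √3 u s`, and squaring gives the last claim.
-/

noncomputable section

open Real

/-- orthogonality to `n₂, n₄, n₇, n₈` together with the normalization
`−x₀/√(u²−1) − x₃·u/√(u²−1) = 1` determines `x₀, x₃`, forces `x₁ = 0`, and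
determines `x₂²`. -/
theorem normalized_solution (u v w : ℝ) (hu : 1 < u) (hv : v ≠ 0)
    (hw : w = 4 * u ^ 2 + 4 * v ^ 2 - 3 - 4 * u ^ 2 * v ^ 2) (hw0 : 0 ≤ w)
    (huw : u * sqrt w ≠ 1)
    (x : Fin 4 → ℝ) (h2 : B x (n2 u v w) = 0) (h4 : B x (n4 u v w) = 0)
    (h7 : B x (n7 u) = 0) (h8 : B x (n8 u) = 0)
    (hnorm : -(x 0) / sqrt (u ^ 2 - 1) - x 3 * u / sqrt (u ^ 2 - 1) = 1) :
    x 0 = (1 - u * sqrt w) / sqrt (u ^ 2 - 1) ∧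
    x 3 = (sqrt w - u) / sqrt (u ^ 2 - 1) ∧
    x 1 = 0 ∧
    3 * (u ^ 2 - 1) * (x 2) ^ 2 = (sqrt 3 * u * sqrt w - sqrt (u ^ 2 + 2)) ^ 2 := by
  simp only [B, n2, n4, n7, n8, Matrix.cons_val] at h2 h4 h7 h8
  have hr0 : 0 < u ^ 2 - 1 := by nlinarith
  have hr : 0 < sqrt (u ^ 2 - 1) := sqrt_pos.mpr hr0
  have hrr : sqrt (u ^ 2 - 1) ^ 2 = u ^ 2 - 1 := sq_sqrt hr0.le
  have hq : sqrt 3 ^ 2 = 3 := sq_sqrt (by norm_num)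
  have hD : 2 * u ^ 2 - 2 ≠ 0 := by linarith
  generalize sqrt (u ^ 2 - 1) = r at *
  generalize sqrt (u ^ 2 + 2) = t at *
  generalize sqrt 3 = q at *
  generalize sqrt w = s at *
  have hN : x 0 + x 3 * u = -r := by
    field_simp at hnorm
    linarith
  -- The sum of the equations for `n₂, n₄`, cleared of denominators.
  have hA : -x 0 * (u - s) + x 3 * (-1 + u * s) = 0 := by
    have : (-x 0 * (u - s) + x 3 * (-1 + u * s)) / (2 * u ^ 2 - 2) = 0 := by
      linear_combination (h2 + h4) / 2
    simpa [hD] using this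
  -- The sum of the equations for `n₇, n₈`, cleared of denominators.
  have hC : -x 0 * (u ^ 2 * q - t) + x 2 * q * (u ^ 2 - 1) + x 3 * (u * t - u * q) = 0 := by
    have hsum : (-x 0 * (u ^ 2 * q - t) + x 3 * (u * t - u * q)) / (2 * u ^ 2 - 2)
        + x 2 * q / 2 = 0 := by
      linear_combination (h7 + h8) / 2
    field_simp at hsum
    linear_combination hsum
  have h1 : x 1 = 0 := by
    have : x 1 * v = 0 := by linear_combination (h2 - h4) / 2
    simpa [hv] using this
  have e3 : x 3 * r = s - u := by
    apply mul_right_cancel₀ hr.ne'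
    linear_combination x 3 * hrr + hA + (u - s) * hN
  have e0 : x 0 * r = 1 - u * s := by
    linear_combination r * hN - u * e3 - hrr
  have e2 : q * r * x 2 = t - q * u * s := by
    apply mul_right_cancel₀ hr0.ne'
    linear_combination r * hC + (u ^ 2 * q - t) * e0 - (u * t - u * q) * e3
  refine ⟨by rw [eq_div_iff hr.ne', e0], by rw [eq_div_iff hr.ne', e3], h1, ?_⟩
  linear_combination (q * r * x 2 + (t - q * u * s)) * e2 - q ^ 2 * x 2 ^ 2 * hrr
    - (u ^ 2 - 1) * x 2 ^ 2 * hq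
end
end

section
/- Let t ∈ (1, 2) be real, set u := √((t+1)/2), v := (3u + √((u²+2)(16u²−3)))/(8u²−2), and w := 4u² + 4v² − 3 − 4u²v², and assume w ≥ 0. If 3w + (u² + 2) = 2√3·u·√(u²+2)·√w, then 72t³ − 28t² + 200t − 325 = 0. -/
/-!
Put `r = u s` with `s = √((u² + 2)(16u² − 3))`. Every quantity in the squared relation is even in
`u`, so after clearing denominators `w` becomes `A + B r` and the relation becomes `P + Q r = 0`,
where `A, B, P, Q` and `r²` are polynomials in `t` (through `u² = (t + 1) / 2`). Multiplying by the
conjugate gives `P² − Q² r² = 0`, and this norm factors as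
`(4t + 2)⁴ (t − 1)² · h(t) · (72t³ − 28t² + 200t − 325)`,
with `h(t) = −625 − 2330t − 3237t² + 916t³ + 20t⁴ + 72t⁵`. On `(1, 2)` the first three factors do
not vanish, so the cubic does.
-/

noncomputable section

open Real

/-- The cofactor `h` has no zero on `(1, 2)`. -/
lemma quintic_neg (t : ℝ) (ht1 : 1 < t) (ht2 : t < 2) :
    -625 - 2330 * t - 3237 * t ^ 2 + 916 * t ^ 3 + 20 * t ^ 4 + 72 * t ^ 5 < 0 := by
  -- Each power of degree at least 3 is bounded by a multiple of `t ^ 2` using `t ≤ 2`.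
  have h3 : t ^ 3 ≤ 2 * t ^ 2 := by nlinarith [sq_nonneg t]
  have h4 : t ^ 4 ≤ 2 * t ^ 3 := by nlinarith [pow_pos (by linarith : 0 < t) 3]
  have h5 : t ^ 5 ≤ 2 * t ^ 4 := by nlinarith [pow_pos (by linarith : 0 < t) 4]
  nlinarith [sq_nonneg t]

/-- The elimination step: `W` is `(8u² − 2)² w` and `r` is `u √((u² + 2)(16u² − 3))`, both written
in terms of `U = u² = (t + 1) / 2`. -/
lemma norm_factorization (t U D W r : ℝ) (hU : U = (t + 1) / 2) (hD : D = 8 * U - 2)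
    (hr : r ^ 2 = U * (U + 2) * (16 * U - 3))
    (hW : W = (4 * U - 3) * D ^ 2 + 4 * (1 - U) * (9 * U + (U + 2) * (16 * U - 3))
      + 24 * (1 - U) * r)
    (h : 9 * W ^ 2 + 6 * W * D ^ 2 * (U + 2) * (1 - 2 * U) + D ^ 4 * (U + 2) ^ 2 = 0) :
    (4 * t + 2) ^ 4 * (t - 1) ^ 2
      * (-625 - 2330 * t - 3237 * t ^ 2 + 916 * t ^ 3 + 20 * t ^ 4 + 72 * t ^ 5)
      * (72 * t ^ 3 - 28 * t ^ 2 + 200 * t - 325) = 0 := by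
  obtain ⟨A, hA⟩ : ∃ A, A = (4 * U - 3) * D ^ 2
      + 4 * (1 - U) * (9 * U + (U + 2) * (16 * U - 3)) := ⟨_, rfl⟩
  obtain ⟨B, hB⟩ : ∃ B, B = 24 * (1 - U) := ⟨_, rfl⟩
  obtain ⟨R, hR⟩ : ∃ R, R = U * (U + 2) * (16 * U - 3) := ⟨_, rfl⟩
  obtain ⟨P, hP⟩ : ∃ P, P = 9 * (A ^ 2 + B ^ 2 * R) + 6 * A * D ^ 2 * (U + 2) * (1 - 2 * U)
      + D ^ 4 * (U + 2) ^ 2 := ⟨_, rfl⟩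
  obtain ⟨Q, hQ⟩ : ∃ Q, Q = 18 * A * B + 6 * B * D ^ 2 * (U + 2) * (1 - 2 * U) := ⟨_, rfl⟩
  rw [← hA, ← hB] at hW
  rw [← hR] at hr
  have hPQ : P + Q * r = 0 := by
    rw [hP, hQ, ← hr, ← h, hW]; ring
  have hN : P ^ 2 - Q ^ 2 * R = 0 := by
    rw [← hr]; linear_combination (P - Q * r) * hPQ
  rw [← hN, hP, hQ, hA, hB, hR, hD, hU]
  ring

/-- for `t ∈ (1,2)`, with `u = √((t+1)/2)`,
`v = (3u + √((u²+2)(16u²−3)))/(8u²−2)` and `w = 4u² + 4v² − 3 − 4u²v² ≥ 0`,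
the relation `3w + (u² + 2) = 2√3·u·√(u²+2)·√w` forces
`72t³ − 28t² + 200t − 325 = 0`. -/
theorem tangency_forces_cubic (t u v w : ℝ) (ht1 : 1 < t) (ht2 : t < 2)
    (hu : u = sqrt ((t + 1) / 2))
    (hv : v = (3 * u + sqrt ((u ^ 2 + 2) * (16 * u ^ 2 - 3))) / (8 * u ^ 2 - 2))
    (hw : w = 4 * u ^ 2 + 4 * v ^ 2 - 3 - 4 * u ^ 2 * v ^ 2) (hw0 : 0 ≤ w)
    (h : 3 * w + (u ^ 2 + 2) = 2 * sqrt 3 * u * sqrt (u ^ 2 + 2) * sqrt w) :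
    72 * t ^ 3 - 28 * t ^ 2 + 200 * t - 325 = 0 := by
  have hU : u ^ 2 = (t + 1) / 2 := by rw [hu, sq_sqrt (by linarith)]
  have hsq : (3 * w + (u ^ 2 + 2)) ^ 2 = 12 * u ^ 2 * (u ^ 2 + 2) * w := by
    rw [h]
    simp only [mul_pow]
    rw [sq_sqrt (by norm_num : (0 : ℝ) ≤ 3), sq_sqrt (by positivity : 0 ≤ u ^ 2 + 2),
      sq_sqrt hw0]
    ring
  obtain ⟨s, hs⟩ : ∃ s, s = sqrt ((u ^ 2 + 2) * (16 * u ^ 2 - 3)) := ⟨_, rfl⟩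
  have hs2 : s ^ 2 = (u ^ 2 + 2) * (16 * u ^ 2 - 3) := by
    rw [hs, sq_sqrt (mul_nonneg (by positivity) (by linarith))]
  rw [← hs] at hv
  have hD : 8 * u ^ 2 - 2 ≠ 0 := by rw [hU]; linarith
  have hvD : v * (8 * u ^ 2 - 2) = 3 * u + s := by rw [hv, div_mul_cancel₀ _ hD]
  have hvD2 : v ^ 2 * (8 * u ^ 2 - 2) ^ 2
      = 9 * u ^ 2 + (u ^ 2 + 2) * (16 * u ^ 2 - 3) + 6 * (u * s) := by
    rw [← mul_pow, hvD, ← hs2]; ring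
  have key := norm_factorization t (u ^ 2) (8 * u ^ 2 - 2) (w * (8 * u ^ 2 - 2) ^ 2) (u * s) hU rfl
    (by rw [mul_pow, hs2]; ring)
    (by rw [hw]; linear_combination 4 * (1 - u ^ 2) * hvD2)
    (by linear_combination (8 * u ^ 2 - 2) ^ 4 * hsq)
  have h1 : (4 * t + 2) ^ 4 * (t - 1) ^ 2 ≠ 0 :=
    mul_ne_zero (pow_ne_zero _ (by linarith)) (pow_ne_zero _ (by linarith))
  exact (mul_eq_zero.mp key).resolve_left (mul_ne_zero h1 (quintic_neg t ht1 ht2).ne)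
end
end

section
/- Let t ∈ (1, 2) be real, set u := √((t+1)/2), v := (3u + √((u²+2)(16u²−3)))/(8u²−2), and w := 4u² + 4v² − 3 − 4u²v²; assume w ≥ 0, v ≠ 0, and u·√w ≠ 1. If a vector x = (x₀,x₁,x₂,x₃) ∈ ℝ⁴ satisfies B(x, nᵢ) = 0 for all i ∈ {2, 4, 7, 8}, the normalization −x₀/√(u²−1) − x₃·u/√(u²−1) = 1, and the unit condition B(x, x) = 1, then 72t³ − 28t² + 200t − 325 = 0; hence t is the unique real root t₀ of this cubic. -/
/-!
Faces 2 and 4 force `x₁ = 0` since `v ≠ 0`. Each pair of faces then contributes one further linear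
equation, and with the normalization, writing `q = √(u² - 1)` and `s = √(u² + 2)`, they give
`x = (-(u√w - 1)/q, 0, (s - √3 u√w)/(√3 q), -(u - √w)/q)`.
The unit condition on this vector is `3w + u² + 2 = 2√3 s u √w` (`unit_relation`). Squaring it,
and squaring the quadratic equation satisfied by `v` to remove its term in `uv`, gives two
polynomial equations in `U = u²` and `V = v²`, both quadratic in `V`. Their resultant with respect
to `V` is, up to a positive constant, `(t - 1)²` times the cubic times a quintic which is negative
on `(1, 2)` (`cubic_of_quadratics`). The cubic is strictly increasing, so its root is unique.
-/

noncomputable section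

open Real

/-- Two quadratics with a common nonzero root have vanishing resultant. -/
lemma resultant_eq_zero {a b c d e f V : ℝ} (hV : V ≠ 0)
    (h1 : a * V ^ 2 + b * V + c = 0) (h2 : d * V ^ 2 + e * V + f = 0) :
    (a * f - c * d) ^ 2 = (a * e - b * d) * (b * f - c * e) := by
  have k1 : (a * e - b * d) * V + (a * f - c * d) = 0 := by linear_combination a * h2 - d * h1
  have k2 : (a * f - c * d) * V + (b * f - c * e) = 0 := by
    apply mul_left_cancel₀ hV
    linear_combination f * h1 - c * h2
  linear_combination (a * f - c * d) * k1 - (a * e - b * d) * k2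

/-- Elimination of `V = v²` from the squared unit relation and the squared equation of `v`,
where `U = u²`. -/
lemma cubic_of_quadratics {t U V w : ℝ} (ht1 : 1 < t) (ht2 : t < 2) (hU : U = (t + 1) / 2)
    (hV : V ≠ 0) (hw : w = 4 * U - 3 - 4 * (U - 1) * V)
    (hP : (3 * w + U + 2) ^ 2 = 12 * (U + 2) * U * w)
    (hQ : ((4 * U - 1) * V - U - 3 / 2) ^ 2 = 9 * U * V) :
    72 * t ^ 3 - 28 * t ^ 2 + 200 * t - 325 = 0 := by
  have h1 : (144 * (U - 1) ^ 2) * V ^ 2 + (-168 + 384 * U - 264 * U ^ 2 + 48 * U ^ 3) * V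
      + (49 - 110 * U + 109 * U ^ 2 - 48 * U ^ 3) = 0 := by
    subst hw
    linear_combination hP
  have h2 : ((4 * U - 1) ^ 2) * V ^ 2 + (3 - 19 * U - 8 * U ^ 2) * V + (U + 3 / 2) ^ 2 = 0 := by
    linear_combination hQ
  have hR := resultant_eq_zero hV h1 h2
  subst hU
  -- The cofactor of `(t - 1) ^ 2` and the cubic in the resultant, which has no root in `(1, 2)`.
  have hneg : 72 * t ^ 5 + 20 * t ^ 4 + 916 * t ^ 3 - 3237 * t ^ 2 - 2330 * t - 625 < 0 := by
    have h3 : t ^ 3 ≤ 2 * t ^ 2 := by nlinarith [sq_nonneg t]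
    have h4 : t ^ 4 ≤ 4 * t ^ 2 := by nlinarith [sq_nonneg t]
    have h5 : t ^ 5 ≤ 8 * t ^ 2 := by nlinarith [sq_nonneg t, sq_nonneg (t ^ 2)]
    nlinarith
  have hprod : ((t - 1) ^ 2 *
      (72 * t ^ 5 + 20 * t ^ 4 + 916 * t ^ 3 - 3237 * t ^ 2 - 2330 * t - 625)) *
      (72 * t ^ 3 - 28 * t ^ 2 + 200 * t - 325) = 0 := by
    linear_combination 16 * hR
  have hne : (t - 1) ^ 2 ≠ 0 := pow_ne_zero _ (by linarith)
  exact (mul_eq_zero.mp hprod).resolve_left (mul_ne_zero hne hneg.ne)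

/-- The unit condition after solving the linear system for `(X, 0, Y, Z)`. Here `a`, `r`, `s`, `q`
stand for `√w`, `√3`, `√(u² + 2)`, `√(u² - 1)`; `h2` is
orthogonality to faces 2 and 4 and `h7` to faces 7 and 8, with denominators cleared, and `hn` is
the normalization. -/
lemma unit_relation {u a r s q X Y Z : ℝ} (hu : 1 < u) (hq : 0 < q) (hr2 : r ^ 2 = 3)
    (hs2 : s ^ 2 = u ^ 2 + 2) (hq2 : q ^ 2 = u ^ 2 - 1)
    (h2 : Z * (u * a - 1) = X * (u - a)) (hn : -X - Z * u = q)
    (h7 : Y * r * (u ^ 2 - 1) = X * (u ^ 2 * r - s) - Z * (u * s - u * r))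
    (hunit : -X ^ 2 + Y ^ 2 + Z ^ 2 = 1) :
    3 * a ^ 2 + u ^ 2 + 2 = 2 * r * s * u * a := by
  have hD : u ^ 2 - 1 ≠ 0 := by nlinarith
  have hX : q * X = -(u * a - 1) := by
    apply mul_left_cancel₀ hq.ne'
    linear_combination X * hq2 - (u * a - 1) * hn - u * h2
  have hZ : q * Z = -(u - a) := by
    have hu0 : u ≠ 0 := by linarith
    apply mul_left_cancel₀ hu0
    linear_combination -hX - q * hn - hq2
  have hY : q * Y * r = s - r * u * a := by
    apply mul_left_cancel₀ hD
    linear_combination q * h7 + (u ^ 2 * r - s) * hX - (u * s - u * r) * hZ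
  have hY2 : q ^ 2 * Y ^ 2 * 3 = (s - r * u * a) ^ 2 := by
    rw [← hY, ← hr2]; ring
  have hX2 : q ^ 2 * X ^ 2 = (u * a - 1) ^ 2 := by
    linear_combination (q * X - (u * a - 1)) * hX
  have hZ2 : q ^ 2 * Z ^ 2 = (u - a) ^ 2 := by
    linear_combination (q * Z - (u - a)) * hZ
  linear_combination 3 * q ^ 2 * hunit + 3 * hX2 - 3 * hZ2 - hY2 + 3 * hq2 - hs2
    - u ^ 2 * a ^ 2 * hr2

/-- The cubic is injective: its difference quotient is a positive definite quadratic form plus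
lower order terms, and is positive everywhere. -/
lemma cubic_root_unique {s t : ℝ} (hs : 72 * s ^ 3 - 28 * s ^ 2 + 200 * s - 325 = 0)
    (ht : 72 * t ^ 3 - 28 * t ^ 2 + 200 * t - 325 = 0) : s = t := by
  have hpos : 72 * (s ^ 2 + s * t + t ^ 2) - 28 * (s + t) + 200 > 0 := by
    nlinarith [sq_nonneg (s + t - 14 / 54), sq_nonneg (s - t)]
  have h : (s - t) * (72 * (s ^ 2 + s * t + t ^ 2) - 28 * (s + t) + 200) = 0 := by
    linear_combination hs - ht
  linarith [(mul_eq_zero.mp h).resolve_right hpos.ne']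

/-- The defining formula for `v` is the quadratic formula for this equation. -/
lemma quadratic_of_formula {u v : ℝ} (hu : 1 < u)
    (hv : v = (3 * u + sqrt ((u ^ 2 + 2) * (16 * u ^ 2 - 3))) / (8 * u ^ 2 - 2)) :
    (4 * u ^ 2 - 1) * v ^ 2 - u ^ 2 - 3 / 2 = 3 * u * v := by
  have hE : 8 * u ^ 2 - 2 ≠ 0 := by nlinarith
  have hS := sq_sqrt (show 0 ≤ (u ^ 2 + 2) * (16 * u ^ 2 - 3) from
    mul_nonneg (by positivity) (by nlinarith))
  rw [eq_div_iff hE] at hv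
  generalize sqrt ((u ^ 2 + 2) * (16 * u ^ 2 - 3)) = S at *
  apply mul_left_cancel₀ hE
  linear_combination (v * (8 * u ^ 2 - 2) - 3 * u + S) / 2 * hv + hS / 2

/-- for `t ∈ (1,2)` with `u = √((t+1)/2)`,
`v = (3u + √((u²+2)(16u²−3)))/(8u²−2)`, `w = 4u² + 4v² − 3 − 4u²v²`, if a vector `x`
is `B`-orthogonal to `n₂, n₄, n₇, n₈`, satisfies the normalization
`−x₀/√(u²−1) − x₃·u/√(u²−1) = 1` and the unit condition `B(x,x) = 1`, then
`72t³ − 28t² + 200t − 325 = 0`; hence `t` is the unique real root of this cubic. -/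
theorem exotic_parameter (t u v w : ℝ) (ht1 : 1 < t) (ht2 : t < 2)
    (hu : u = sqrt ((t + 1) / 2))
    (hv : v = (3 * u + sqrt ((u ^ 2 + 2) * (16 * u ^ 2 - 3))) / (8 * u ^ 2 - 2))
    (hw : w = 4 * u ^ 2 + 4 * v ^ 2 - 3 - 4 * u ^ 2 * v ^ 2) (hw0 : 0 ≤ w)
    (hv0 : v ≠ 0) (huw : u * sqrt w ≠ 1)
    (x : Fin 4 → ℝ) (h2 : B x (n2 u v w) = 0) (h4 : B x (n4 u v w) = 0)
    (h7 : B x (n7 u) = 0) (h8 : B x (n8 u) = 0)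
    (hnorm : -(x 0) / sqrt (u ^ 2 - 1) - x 3 * u / sqrt (u ^ 2 - 1) = 1)
    (hunit : B x x = 1) :
    72 * t ^ 3 - 28 * t ^ 2 + 200 * t - 325 = 0 ∧
    ∀ s : ℝ, 72 * s ^ 3 - 28 * s ^ 2 + 200 * s - 325 = 0 → s = t := by
  have hu2 : u ^ 2 = (t + 1) / 2 := by rw [hu, sq_sqrt (by linarith)]
  have hu0 : 0 ≤ u := hu ▸ sqrt_nonneg _
  have hu1 : 1 < u := by nlinarith
  have hD : 0 < u ^ 2 - 1 := by nlinarith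
  have hD' : 2 * u ^ 2 - 2 ≠ 0 := by linarith
  have ha2 := sq_sqrt hw0
  have hr2 : sqrt 3 ^ 2 = 3 := sq_sqrt (by norm_num)
  have hr0 : sqrt 3 ≠ 0 := by positivity
  have hs2 : sqrt (u ^ 2 + 2) ^ 2 = u ^ 2 + 2 := sq_sqrt (by positivity)
  have hq2 := sq_sqrt hD.le
  have hq : 0 < sqrt (u ^ 2 - 1) := sqrt_pos.mpr hD
  simp only [B, n2, n4, n7, n8, Matrix.cons_val] at h2 h4 h7 h8 hunit
  have hx1 : x 1 = 0 := by
    have h : x 1 * v = 0 := by linear_combination (h2 - h4) / 2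
    exact (mul_eq_zero.mp h).resolve_right hv0
  rw [hx1] at h2 h8 hunit
  generalize sqrt (u ^ 2 + 2) = s at *
  generalize sqrt (u ^ 2 - 1) = q at *
  generalize sqrt 3 = r at *
  have e2 : x 3 * (u * sqrt w - 1) = x 0 * (u - sqrt w) := by
    field_simp at h2
    linear_combination h2
  have e7 : x 2 * r * (u ^ 2 - 1) = x 0 * (u ^ 2 * r - s) - x 3 * (u * s - u * r) := by
    field_simp at h8
    linear_combination h8
  have en : -x 0 - x 3 * u = q := by
    field_simp at hnorm
    linear_combination hnorm
  have hrel := unit_relation hu1 hq hr2 hs2 hq2 e2 en e7 (by linear_combination hunit)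
  have hP : (3 * w + u ^ 2 + 2) ^ 2 = 12 * (u ^ 2 + 2) * u ^ 2 * w := by
    rw [ha2] at hrel
    rw [hrel, ← hs2]
    linear_combination 4 * r ^ 2 * s ^ 2 * u ^ 2 * ha2 + 4 * s ^ 2 * u ^ 2 * w * hr2
  have hvq := quadratic_of_formula hu1 hv
  have hcubic := cubic_of_quadratics ht1 ht2 hu2 (pow_ne_zero 2 hv0)
    (by linear_combination hw) hP (by rw [hvq]; ring)
  exact ⟨hcubic, fun s hs => cubic_root_unique hs hcubic⟩
end
end
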